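/- Let n, k be positive integers with n > k ≥ 4, (n−2) ≡ 0 (mod k−2), (n−1)(n−2) ≡ 0 (mod (k−1)(k−2)), and n(n−1)(n−2) ≢ 0 (mod k(k−1)(k−2)). Then D(n,k,3) ≤ J(n,k,3) − 3, where J(n,k,3) = ⌊(n/k)·⌊((n−1)/(k−1))·⌊(n−2)/(k−2)⌋⌋⌋. -/

import Mathlib

/-- The packing number D(n,k,t): the maximum number of k-subsets of an n-set
such that every t-subset is contained in at most one of them. -/
noncomputable def packingNumber (n k t : ℕ) : ℕ :=
  sSup {m | ∃ B : Finset (Finset (Fin n)),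
    (∀ b ∈ B, b.card = k) ∧
    (∀ T : Finset (Fin n), T.card = t → (B.filter (fun b => T ⊆ b)).card ≤ 1) ∧
    B.card = m}

/-!
The triples covered by no block form a `3`-uniform hypergraph `H`, the leave. The divisibility
assumptions on `n` pass to the degrees of vertices and pairs in `H`, but `k.choose 3` does not
divide the number of edges, and this forces at least `3 * k.choose 3` edges.

Divide the degree of a vertex and the codegree of a pair by their values in the complete `3`-graph
on `k` vertices, and call a vertex light if its reduced degree is `1` and heavy if it is larger.
The closed neighbourhood of a light vertex spans a complete `3`-graph on `k` vertices, and distinct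
such cliques meet in heavy vertices only. Subtracting the reduced degrees in `H` from the degrees in
the family of light cliques therefore leaves a signed count supported on the heavy vertices.

If `H` has fewer than `k` heavy vertices, all terms of this count are nonnegative. With few edges
there are at most two light cliques, while heavy vertices have reduced degree at least `2`, so the
terms vanish and `H` has exactly as many edges as the light cliques together. With `k` or more heavy
vertices and few edges, all reduced degrees would be determined, a heavy vertex could miss at most
one light vertex, and yet counting codegrees would produce one that misses all of them.
-/

section

open Finset

variable {V : Type*} [DecidableEq V] {k t p : ℕ} {H B : Finset (Finset V)} {S : Finset V}
  {x y z b c : V}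

/-! ### Set degrees, packings and their leaves -/

/-- The degree of a vertex set `S` in a hypergraph `H`: the number of edges containing `S`. -/
def setDegree (H : Finset (Finset V)) (S : Finset V) : ℕ := #{T ∈ H | S ⊆ T}

lemma setDegree_empty (H : Finset (Finset V)) : setDegree H ∅ = #H := by
  simp [setDegree]

lemma setDegree_le_card (H : Finset (Finset V)) (S : Finset V) : setDegree H S ≤ #H :=
  card_filter_le _ _

lemma setDegree_eq_card_iff : setDegree H S = #H ↔ ∀ T ∈ H, S ⊆ T :=
  card_filter_eq_iff

lemma setDegree_anti (H : Finset (Finset V)) : Antitone (setDegree H) := fun _ _ hST =>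
  card_le_card (monotone_filter_right _ fun _ _ hT => hST.trans hT)

lemma setDegree_of_card_eq (hH : (H : Set (Finset V)).Sized t) (hS : #S = t) :
    setDegree H S = if S ∈ H then 1 else 0 := by
  have heq : ∀ T ∈ H, S ⊆ T ↔ S = T := fun T hT =>
    ⟨fun hST => eq_of_subset_of_card_le hST (hS ▸ (hH hT).le), fun hST => hST ▸ Subset.rfl⟩
  rw [setDegree, filter_congr heq, filter_eq]
  split_ifs <;> simp

/-- A `t`-uniform hypergraph satisfying the necessary divisibility conditions on the degrees of
nonempty vertex sets for a decomposition into complete `t`-uniform hypergraphs on `k` vertices. The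
condition that `k.choose t` divides the number of edges (the case `S = ∅`) is not included. -/
structure IsCliqueDivisible (k t : ℕ) (H : Finset (Finset V)) : Prop where
  sized : (H : Set (Finset V)).Sized t
  dvd_setDegree : ∀ S : Finset V, S.Nonempty → #S ≤ t →
    (k - #S).choose (t - #S) ∣ setDegree H S

/-- A `t`-`(n, k, 1)` packing on the point set `V` with `n = |V|`, given by its set of blocks. -/
structure IsPacking (k t : ℕ) (B : Finset (Finset V)) : Prop where
  sized : (B : Set (Finset V)).Sized k
  setDegree_le_one : ∀ T : Finset V, #T = t → setDegree B T ≤ 1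

/-- The reduced degree of a vertex: its degree divided by `(p + 1).choose 2`, the degree in the
complete `3`-graph on `p + 2` vertices. The division is exact in clique-divisible hypergraphs. -/
def redDegree (p : ℕ) (H : Finset (Finset V)) (x : V) : ℕ :=
  setDegree H {x} / (p + 1).choose 2

lemma IsCliqueDivisible.mul_redDegree (hH : IsCliqueDivisible (p + 2) 3 H) (x : V) :
    (p + 1).choose 2 * redDegree p H x = setDegree H {x} :=
  Nat.mul_div_cancel' (hH.dvd_setDegree {x} (singleton_nonempty x) (by simp))

section Fintype

variable [Fintype V]

lemma sum_setDegree_insert (hH : (H : Set (Finset V)).Sized t) (S : Finset V) :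
    ∑ y ∈ Sᶜ, setDegree H (insert y S) = (t - #S) * setDegree H S := by
  have hcount : ∀ T ∈ ({T ∈ H | S ⊆ T} : Finset (Finset V)), #{y ∈ Sᶜ | y ∈ T} = t - #S := by
    intro T hT
    obtain ⟨hTH, hST⟩ := mem_filter.1 hT
    rw [filter_mem_eq_inter, inter_comm, ← sdiff_eq_inter_compl, card_sdiff_of_subset hST, hH hTH]
  calc ∑ y ∈ Sᶜ, setDegree H (insert y S)
      = ∑ y ∈ Sᶜ, #{T ∈ {T ∈ H | S ⊆ T} | y ∈ T} := by
        simp only [setDegree, insert_subset_iff, filter_filter, and_comm]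
    _ = ∑ T ∈ H with S ⊆ T, #{y ∈ Sᶜ | y ∈ T} :=
        sum_card_bipartiteAbove_eq_sum_card_bipartiteBelow _
    _ = (t - #S) * setDegree H S := by
        rw [sum_congr rfl hcount, sum_const, smul_eq_mul, mul_comm, setDegree]

lemma sum_setDegree_singleton (hH : (H : Set (Finset V)).Sized t) :
    ∑ x, setDegree H {x} = t * #H := by
  simpa [setDegree_empty] using sum_setDegree_insert hH ∅

lemma sum_setDegree_pair (hH : (H : Set (Finset V)).Sized t) (x : V) :
    ∑ y ∈ {x}ᶜ, setDegree H {x, y} = (t - 1) * setDegree H {x} := by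
  simpa only [card_singleton, pair_comm x] using sum_setDegree_insert hH {x}

lemma sum_setDegree_superset (hB : (B : Set (Finset V)).Sized k) (hS : #S ≤ t) :
    ∑ T ∈ powersetCard t univ with S ⊆ T, setDegree B T =
      setDegree B S * (k - #S).choose (t - #S) := by
  set U : Finset (Finset V) := {T ∈ powersetCard t univ | S ⊆ T}
  have hblock : ∀ b ∈ B,
      #{T ∈ U | T ⊆ b} = if S ⊆ b then (k - #S).choose (t - #S) else 0 := by
    intro b hb
    split_ifs with hSb
    · rw [← hB hb, ← card_filter_powersetCard_subset S b t hSb hS]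
      congr 1
      grind
    · rw [card_eq_zero, filter_eq_empty_iff]
      exact fun T hT hTb => hSb ((mem_filter.1 hT).2.trans hTb)
  calc ∑ T ∈ U, setDegree B T = ∑ b ∈ B, #{T ∈ U | T ⊆ b} :=
        sum_card_bipartiteAbove_eq_sum_card_bipartiteBelow _
    _ = setDegree B S * (k - #S).choose (t - #S) := by
        rw [sum_congr rfl hblock, ← sum_filter, sum_const, smul_eq_mul, setDegree]

/-- The leave of a packing: the `t`-subsets contained in no block. -/
def leave (t : ℕ) (B : Finset (Finset V)) : Finset (Finset V) :=
  {T ∈ powersetCard t univ | ∀ b ∈ B, ¬T ⊆ b}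

lemma sized_leave (t : ℕ) (B : Finset (Finset V)) : (leave t B : Set (Finset V)).Sized t :=
  fun _ hT => mem_powersetCard_univ.1 (mem_filter.1 hT).1

namespace IsPacking

lemma setDegree_leave_add (hB : IsPacking k t B) (hS : #S ≤ t) :
    setDegree (leave t B) S + setDegree B S * (k - #S).choose (t - #S) =
      (Fintype.card V - #S).choose (t - #S) := by
  have hleave : setDegree (leave t B) S =
      ∑ T ∈ powersetCard t univ with S ⊆ T, if setDegree B T = 0 then 1 else 0 := by
    simp only [← card_filter, setDegree, leave, filter_filter, card_eq_zero, filter_eq_empty_iff,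
      and_comm]
  have hone : ∀ T ∈ ({T ∈ powersetCard t univ | S ⊆ T} : Finset (Finset V)),
      (if setDegree B T = 0 then 1 else 0) + setDegree B T = 1 := by
    intro T hT
    have := hB.setDegree_le_one T (mem_powersetCard_univ.1 (mem_filter.1 hT).1)
    split_ifs <;> omega
  rw [hleave, ← sum_setDegree_superset hB.sized hS, ← sum_add_distrib, sum_congr rfl hone,
    ← card_eq_sum_ones, card_filter_powersetCard_subset S univ t (subset_univ S) hS, card_univ]

lemma isCliqueDivisible_leave (hB : IsPacking k t B)
    (h : ∀ s, 0 < s → s ≤ t → (k - s).choose (t - s) ∣ (Fintype.card V - s).choose (t - s)) :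
    IsCliqueDivisible k t (leave t B) where
  sized := sized_leave t B
  dvd_setDegree S hS hSt := by
    have hdvd := h #S hS.card_pos hSt
    rw [← hB.setDegree_leave_add hSt] at hdvd
    exact (Nat.dvd_add_left (dvd_mul_left _ _)).1 hdvd

end IsPacking

/-! ### Links and light vertices -/

/-- The link of a pair in a `3`-uniform hypergraph: the vertices that complete it to an edge. -/
def pairLink (H : Finset (Finset V)) (x y : V) : Finset V := {z | {x, y, z} ∈ H}

/-- The vertices sharing an edge with `x` in a `3`-uniform hypergraph. -/
def nbhd (H : Finset (Finset V)) (x : V) : Finset V := {y | (pairLink H x y).Nonempty}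

lemma mem_pairLink : z ∈ pairLink H x y ↔ {x, y, z} ∈ H := by
  simp [pairLink]

lemma pairLink_comm (H : Finset (Finset V)) (x y : V) : pairLink H x y = pairLink H y x := by
  ext z
  rw [mem_pairLink, mem_pairLink, insert_comm]

lemma mem_pairLink_right_comm : z ∈ pairLink H x y ↔ y ∈ pairLink H x z := by
  rw [mem_pairLink, mem_pairLink, pair_comm]

lemma mem_pairLink_rotate : z ∈ pairLink H x y ↔ x ∈ pairLink H y z := by
  rw [pairLink_comm, mem_pairLink_right_comm]

lemma mem_nbhd : y ∈ nbhd H x ↔ (pairLink H x y).Nonempty := by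
  simp [nbhd]

lemma mem_nbhd_comm : y ∈ nbhd H x ↔ x ∈ nbhd H y := by
  rw [mem_nbhd, mem_nbhd, pairLink_comm]

lemma mem_nbhd_of_mem_pairLink (h : z ∈ pairLink H x y) : z ∈ nbhd H x :=
  mem_nbhd.2 ⟨y, mem_pairLink_right_comm.1 h⟩

lemma pairwise_ne_of_mem_pairLink (hH : (H : Set (Finset V)).Sized 3) (h : z ∈ pairLink H x y) :
    x ≠ y ∧ x ≠ z ∧ y ≠ z :=
  card_triple_eq_three_iff.1 (hH (mem_pairLink.1 h))

lemma pairLink_self (hH : (H : Set (Finset V)).Sized 3) (x : V) : pairLink H x x = ∅ :=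
  eq_empty_of_forall_notMem fun _ hz => (pairwise_ne_of_mem_pairLink hH hz).1 rfl

lemma notMem_nbhd_self (hH : (H : Set (Finset V)).Sized 3) (x : V) : x ∉ nbhd H x := by
  simp [mem_nbhd, pairLink_self hH]

lemma pairLink_subset_erase_nbhd (hH : (H : Set (Finset V)).Sized 3) (x y : V) :
    pairLink H x y ⊆ (nbhd H x).erase y := fun _ hz =>
  mem_erase.2 ⟨(pairwise_ne_of_mem_pairLink hH hz).2.2.symm, mem_nbhd_of_mem_pairLink hz⟩

lemma card_pairLink (hH : (H : Set (Finset V)).Sized 3) (hxy : x ≠ y) :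
    #(pairLink H x y) = setDegree H {x, y} := by
  have hdeg : ∀ z ∈ ({x, y} : Finset V)ᶜ,
      setDegree H (insert z {x, y}) = if z ∈ pairLink H x y then 1 else 0 := by
    intro z hz
    obtain ⟨hzx, hzy⟩ : z ≠ x ∧ z ≠ y := by simpa using hz
    rw [setDegree_of_card_eq hH (card_triple_eq_three_iff.2 ⟨hzx, hzy, hxy⟩)]
    exact if_congr (mem_pairLink.symm.trans mem_pairLink_rotate) rfl rfl
  have hsub : pairLink H x y ⊆ ({x, y} : Finset V)ᶜ := by
    intro z hz
    obtain ⟨-, hxz, hyz⟩ := pairwise_ne_of_mem_pairLink hH hz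
    simp [hxz.symm, hyz.symm]
  calc #(pairLink H x y)
      = ∑ z ∈ ({x, y} : Finset V)ᶜ, setDegree H (insert z {x, y}) := by
        rw [sum_congr rfl hdeg, ← card_filter, filter_mem_eq_inter, inter_eq_right.2 hsub]
    _ = setDegree H {x, y} := by
        rw [sum_setDegree_insert hH, card_pair hxy, show 3 - 2 = 1 from rfl, one_mul]

lemma sum_card_pairLink (hH : (H : Set (Finset V)).Sized 3) (x : V) :
    ∑ y, #(pairLink H x y) = 2 * setDegree H {x} := by
  rw [← sum_setDegree_pair hH, ← sum_add_sum_compl {x}, sum_singleton, pairLink_self hH,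
    card_empty, zero_add]
  exact sum_congr rfl fun y hy => card_pairLink hH (by simpa [eq_comm] using hy)

/-- The reduced codegree of a pair: its codegree divided by `p`, the codegree in the complete
`3`-graph on `p + 2` vertices. The division is exact in clique-divisible hypergraphs. -/
def redCodegree (p : ℕ) (H : Finset (Finset V)) (x y : V) : ℕ := #(pairLink H x y) / p

/-- The vertices whose degree is at least twice that in the complete `3`-graph on `p + 2` vertices.
In a clique-divisible hypergraph these are the nonisolated vertices that are not light. -/
def heavy (p : ℕ) (H : Finset (Finset V)) : Finset V := {x | 2 ≤ redDegree p H x}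

/-- The vertices of reduced degree `1`. In a clique-divisible hypergraph their degree is that in the
complete `3`-graph on `p + 2` vertices. -/
def light (p : ℕ) (H : Finset (Finset V)) : Finset V := {x | redDegree p H x = 1}

/-- The closed neighbourhood of a vertex; that of a light vertex spans a complete `3`-graph. -/
def closedNbhd (H : Finset (Finset V)) (x : V) : Finset V := insert x (nbhd H x)

/-- The closed neighbourhoods of the light vertices, as a hypergraph to be compared with `H` by
means of its degrees. -/
def lightCliques (p : ℕ) (H : Finset (Finset V)) : Finset (Finset V) :=
  (light p H).image (closedNbhd H)

lemma mem_heavy : x ∈ heavy p H ↔ 2 ≤ redDegree p H x := by simp [heavy]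

lemma mem_light : x ∈ light p H ↔ redDegree p H x = 1 := by simp [light]

lemma mem_heavy_union_light : x ∈ heavy p H ∪ light p H ↔ 0 < redDegree p H x := by
  rw [mem_union, mem_heavy, mem_light]
  omega

lemma disjoint_heavy_light (p : ℕ) (H : Finset (Finset V)) :
    Disjoint (heavy p H) (light p H) := by
  rw [disjoint_left]
  intro x hx hx'
  rw [mem_heavy] at hx
  rw [mem_light] at hx'
  omega

lemma ne_of_mem_heavy_of_mem_light (hx : x ∈ heavy p H) (hb : b ∈ light p H) : x ≠ b :=
  disjoint_iff_ne.1 (disjoint_heavy_light p H) x hx b hb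

lemma mem_closedNbhd : y ∈ closedNbhd H x ↔ y = x ∨ y ∈ nbhd H x := mem_insert

lemma mem_lightCliques {q : Finset V} :
    q ∈ lightCliques p H ↔ ∃ b ∈ light p H, closedNbhd H b = q := mem_image

lemma redCodegree_comm (p : ℕ) (H : Finset (Finset V)) (x y : V) :
    redCodegree p H x y = redCodegree p H y x := by
  rw [redCodegree, redCodegree, pairLink_comm]

namespace IsCliqueDivisible

lemma mul_redCodegree (hH : IsCliqueDivisible (p + 2) 3 H) (x y : V) :
    p * redCodegree p H x y = #(pairLink H x y) := by
  refine Nat.mul_div_cancel' ?_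
  obtain rfl | hxy := eq_or_ne x y
  · simp [pairLink_self hH.sized]
  · have := hH.dvd_setDegree {x, y} (insert_nonempty _ _) (by rw [card_pair hxy]; norm_num)
    simpa [card_pair hxy, card_pairLink hH.sized hxy] using this

lemma sum_redCodegree (hH : IsCliqueDivisible (p + 2) 3 H) (x : V) :
    ∑ y, redCodegree p H x y = (p + 1) * redDegree p H x := by
  obtain rfl | hp := p.eq_zero_or_pos
  · simp [redCodegree, redDegree]
  · refine Nat.eq_of_mul_eq_mul_left hp ?_
    calc p * ∑ y, redCodegree p H x y = 2 * setDegree H {x} := by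
          simp only [mul_sum, hH.mul_redCodegree, sum_card_pairLink hH.sized]
      _ = (p + 1).choose 2 * 2 * redDegree p H x := by rw [← hH.mul_redDegree]; ring
      _ = p * ((p + 1) * redDegree p H x) := by
          rw [← Nat.add_one_mul_choose_eq, Nat.choose_one_right]; ring

lemma redCodegree_pos_iff (hH : IsCliqueDivisible (p + 2) 3 H) :
    0 < redCodegree p H x y ↔ y ∈ nbhd H x := by
  rw [mem_nbhd, ← card_pos, ← hH.mul_redCodegree]
  refine ⟨fun h => Nat.mul_pos (Nat.pos_of_ne_zero ?_) h, Nat.pos_of_mul_pos_left⟩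
  rintro rfl
  simp [redCodegree] at h

lemma redCodegree_self (hH : IsCliqueDivisible (p + 2) 3 H) (x : V) :
    redCodegree p H x x = 0 := by
  simp [redCodegree, pairLink_self hH.sized]

lemma sum_nbhd_redCodegree (hH : IsCliqueDivisible (p + 2) 3 H) (x : V) :
    ∑ y ∈ nbhd H x, redCodegree p H x y = (p + 1) * redDegree p H x := by
  rw [← hH.sum_redCodegree]
  refine sum_subset (subset_univ _) fun y _ hy => ?_
  rw [← hH.redCodegree_pos_iff] at hy
  omega

lemma mul_redCodegree_lt_card_nbhd (hH : IsCliqueDivisible (p + 2) 3 H) (hy : y ∈ nbhd H x) :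
    p * redCodegree p H x y < #(nbhd H x) := by
  rw [hH.mul_redCodegree]
  exact (card_le_card (pairLink_subset_erase_nbhd hH.sized x y)).trans_lt (card_erase_lt_of_mem hy)

lemma card_nbhd_le (hH : IsCliqueDivisible (p + 2) 3 H) (x : V) :
    #(nbhd H x) ≤ (p + 1) * redDegree p H x := by
  rw [← hH.sum_nbhd_redCodegree, card_eq_sum_ones]
  exact sum_le_sum fun y hy => hH.redCodegree_pos_iff.2 hy

lemma redDegree_pos_of_mem_nbhd (hH : IsCliqueDivisible (p + 2) 3 H) (hy : y ∈ nbhd H x) :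
    0 < redDegree p H x :=
  Nat.pos_of_mul_pos_left ((card_pos.2 ⟨y, hy⟩).trans_le (hH.card_nbhd_le x))

lemma nbhd_subset (hH : IsCliqueDivisible (p + 2) 3 H) (x : V) :
    nbhd H x ⊆ (heavy p H ∪ light p H).erase x := fun _ hy =>
  mem_erase.2 ⟨ne_of_mem_of_not_mem hy (notMem_nbhd_self hH.sized x),
    mem_heavy_union_light.2 (hH.redDegree_pos_of_mem_nbhd (mem_nbhd_comm.1 hy))⟩

lemma two_mul_lt_card_nbhd_of_mem_heavy (hH : IsCliqueDivisible (p + 2) 3 H) (hx : x ∈ heavy p H) :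
    2 * p < #(nbhd H x) := by
  by_contra! hcard
  have hle : ∀ y ∈ nbhd H x, redCodegree p H x y ≤ 1 := by
    intro y hy
    have := hH.mul_redCodegree_lt_card_nbhd hy
    nlinarith
  have hsum := sum_le_card_nsmul _ _ _ hle
  rw [hH.sum_nbhd_redCodegree, smul_eq_mul, mul_one] at hsum
  have := mem_heavy.1 hx
  nlinarith

lemma card_nbhd_of_mem_light (hH : IsCliqueDivisible (p + 2) 3 H) (hb : b ∈ light p H) :
    #(nbhd H b) = p + 1 := by
  have hsum := hH.sum_nbhd_redCodegree b
  have hle := hH.card_nbhd_le b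
  rw [mem_light.1 hb, mul_one] at hsum hle
  obtain ⟨y, hy⟩ : (nbhd H b).Nonempty := by
    rw [nonempty_iff_ne_empty]
    intro h
    simp [h] at hsum
  have hlt := hH.mul_redCodegree_lt_card_nbhd hy
  have hpos := hH.redCodegree_pos_iff.2 hy
  nlinarith

lemma pairLink_of_mem_light (hH : IsCliqueDivisible (p + 2) 3 H) (hb : b ∈ light p H)
    (hy : y ∈ nbhd H b) : pairLink H b y = (nbhd H b).erase y := by
  refine eq_of_subset_of_card_le (pairLink_subset_erase_nbhd hH.sized b y) ?_
  rw [card_erase_of_mem hy, hH.card_nbhd_of_mem_light hb, ← hH.mul_redCodegree]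
  exact Nat.le_mul_of_pos_right p (hH.redCodegree_pos_iff.2 hy)

lemma redCodegree_of_mem_light (hH : IsCliqueDivisible (p + 2) 3 H) (hb : b ∈ light p H)
    (x : V) : redCodegree p H b x = if x ∈ nbhd H b then 1 else 0 := by
  split_ifs with hx
  · have hlt := hH.mul_redCodegree_lt_card_nbhd hx
    have hpos := hH.redCodegree_pos_iff.2 hx
    rw [hH.card_nbhd_of_mem_light hb] at hlt
    obtain rfl | hp := p.eq_zero_or_pos
    · simp [redCodegree] at hpos
    · nlinarith
  · rw [← hH.redCodegree_pos_iff] at hx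
    omega

lemma mem_pairLink_of_mem_light (hH : IsCliqueDivisible (p + 2) 3 H) (hb : b ∈ light p H)
    (hx : x ∈ nbhd H b) (hy : y ∈ nbhd H b) (hxy : x ≠ y) : b ∈ pairLink H x y := by
  rw [← mem_pairLink_rotate, hH.pairLink_of_mem_light hb hx]
  exact mem_erase.2 ⟨hxy.symm, hy⟩

/-! ### Light cliques -/

lemma card_closedNbhd_of_mem_light (hH : IsCliqueDivisible (p + 2) 3 H) (hb : b ∈ light p H) :
    #(closedNbhd H b) = p + 2 := by
  rw [closedNbhd, card_insert_of_notMem (notMem_nbhd_self hH.sized b), hH.card_nbhd_of_mem_light hb]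

lemma sized_lightCliques (hH : IsCliqueDivisible (p + 2) 3 H) :
    (lightCliques p H : Set (Finset V)).Sized (p + 2) := by
  intro q hq
  obtain ⟨b, hb, rfl⟩ := mem_lightCliques.1 hq
  exact hH.card_closedNbhd_of_mem_light hb

lemma closedNbhd_eq_of_mem_light (hH : IsCliqueDivisible (p + 2) 3 H) (hb : b ∈ light p H)
    (hc : c ∈ light p H) (hbc : c ∈ closedNbhd H b) : closedNbhd H c = closedNbhd H b := by
  refine (eq_of_subset_of_card_le (fun y hy => ?_) ?_).symm
  · obtain rfl | hcb := mem_closedNbhd.1 hbc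
    · exact hy
    obtain rfl | hyb := mem_closedNbhd.1 hy
    · exact mem_closedNbhd.2 (.inr (mem_nbhd_comm.1 hcb))
    obtain rfl | hyc := eq_or_ne y c
    · exact mem_closedNbhd.2 (.inl rfl)
    · exact mem_closedNbhd.2
        (.inr (mem_nbhd.2 ⟨b, hH.mem_pairLink_of_mem_light hb hcb hyb hyc.symm⟩))
  · rw [hH.card_closedNbhd_of_mem_light hb, hH.card_closedNbhd_of_mem_light hc]

lemma setDegree_lightCliques_of_mem_light (hH : IsCliqueDivisible (p + 2) 3 H)
    (hb : b ∈ light p H) (hbS : b ∈ S) :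
    setDegree (lightCliques p H) S = if S ⊆ closedNbhd H b then 1 else 0 := by
  have heq : ∀ q ∈ lightCliques p H, S ⊆ q ↔ q = closedNbhd H b ∧ S ⊆ closedNbhd H b := by
    intro q hq
    obtain ⟨c, hc, rfl⟩ := mem_lightCliques.1 hq
    refine ⟨fun hS => ?_, fun ⟨hcb, hS⟩ => hcb ▸ hS⟩
    rw [hH.closedNbhd_eq_of_mem_light hc hb (hS hbS)]
    exact ⟨rfl, hS⟩
  rw [setDegree, filter_congr heq]
  split_ifs with hS
  · simp [hS, filter_eq', mem_lightCliques.2 ⟨b, hb, rfl⟩]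
  · simp [hS]

lemma setDegree_lightCliques_singleton (hH : IsCliqueDivisible (p + 2) 3 H)
    (hx : x ∉ heavy p H) : setDegree (lightCliques p H) {x} = redDegree p H x := by
  rw [mem_heavy, not_le] at hx
  obtain h0 | h1 : redDegree p H x = 0 ∨ redDegree p H x = 1 := by omega
  · rw [h0, setDegree, card_eq_zero, filter_eq_empty_iff]
    intro q hq hxq
    obtain ⟨b, hb, rfl⟩ := mem_lightCliques.1 hq
    obtain rfl | hxb := mem_closedNbhd.1 (singleton_subset_iff.1 hxq)
    · rw [mem_light.1 hb] at h0
      exact one_ne_zero h0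
    · exact (hH.redDegree_pos_of_mem_nbhd (mem_nbhd_comm.1 hxb)).ne' h0
  · rw [h1, hH.setDegree_lightCliques_of_mem_light (mem_light.2 h1) (mem_singleton_self x),
      if_pos (singleton_subset_iff.2 (mem_closedNbhd.2 (.inl rfl)))]

lemma setDegree_lightCliques_pair (hH : IsCliqueDivisible (p + 2) 3 H) (hxy : x ≠ y)
    (hy : y ∉ heavy p H) : setDegree (lightCliques p H) {x, y} = redCodegree p H x y := by
  by_cases hyl : y ∈ light p H
  · have hsub : {x, y} ⊆ closedNbhd H y ↔ x ∈ nbhd H y := by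
      simp [insert_subset_iff, mem_closedNbhd, hxy]
    rw [hH.setDegree_lightCliques_of_mem_light hyl (mem_insert_of_mem (mem_singleton_self y)),
      redCodegree_comm, hH.redCodegree_of_mem_light hyl]
    exact if_congr hsub rfl rfl
  · have h0 : redDegree p H y = 0 := by
      rw [mem_heavy] at hy
      rw [mem_light] at hyl
      omega
    have hle : setDegree (lightCliques p H) {x, y} ≤ setDegree (lightCliques p H) {y} :=
      setDegree_anti _ (subset_insert _ _)
    have hnbhd : ¬0 < redCodegree p H x y := fun h =>
      (hH.redDegree_pos_of_mem_nbhd (mem_nbhd_comm.1 (hH.redCodegree_pos_iff.1 h))).ne' h0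
    rw [hH.setDegree_lightCliques_singleton hy] at hle
    omega

lemma sum_heavy_setDegree_lightCliques_sub (hH : IsCliqueDivisible (p + 2) 3 H) :
    ∑ x ∈ heavy p H, ((setDegree (lightCliques p H) {x} : ℤ) - redDegree p H x) =
      (p + 2) * #(lightCliques p H) - ∑ x, (redDegree p H x : ℤ) := by
  have hcliques := sum_setDegree_singleton hH.sized_lightCliques
  zify at hcliques
  rw [← hcliques, ← sum_sub_distrib]
  refine sum_subset (subset_univ _) fun x _ hx => ?_
  rw [hH.setDegree_lightCliques_singleton hx, sub_self]

lemma sum_heavy_setDegree_lightCliques_pair_sub (hH : IsCliqueDivisible (p + 2) 3 H) (x : V) :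
    ∑ y ∈ (heavy p H).erase x,
        ((setDegree (lightCliques p H) {x, y} : ℤ) - redCodegree p H x y) =
      (p + 1) * (setDegree (lightCliques p H) {x} - redDegree p H x) := by
  have hcliques := sum_setDegree_pair hH.sized_lightCliques x
  have hcodegrees := hH.sum_redCodegree x
  rw [← sum_add_sum_compl {x}, sum_singleton, hH.redCodegree_self, zero_add] at hcodegrees
  rw [show p + 2 - 1 = p + 1 from rfl] at hcliques
  zify at hcliques hcodegrees
  rw [mul_sub, ← hcliques, ← hcodegrees, ← sum_sub_distrib]
  refine sum_subset (fun y hy => ?_) fun y hyx hy => ?_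
  · simpa using ne_of_mem_erase hy
  · have hyx : y ≠ x := by simpa using hyx
    rw [hH.setDegree_lightCliques_pair hyx.symm fun h => hy (mem_erase.2 ⟨hyx, h⟩), sub_self]

lemma mem_pairLink_of_subset_closedNbhd (hH : IsCliqueDivisible (p + 2) 3 H) (hb : b ∈ light p H)
    (hx : x ∈ heavy p H) (hy : y ∈ heavy p H) (hxy : x ≠ y) (h : {x, y} ⊆ closedNbhd H b) :
    b ∈ pairLink H x y := by
  simp only [insert_subset_iff, singleton_subset_iff, mem_closedNbhd,
    ne_of_mem_heavy_of_mem_light hx hb, ne_of_mem_heavy_of_mem_light hy hb, false_or] at h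
  exact hH.mem_pairLink_of_mem_light hb h.1 h.2 hxy

lemma pairLink_subset_sdiff (hH : IsCliqueDivisible (p + 2) 3 H) (x y : V) :
    pairLink H x y ⊆ (heavy p H ∪ light p H) \ {x, y} := by
  intro z hz
  obtain ⟨-, hxz, hyz⟩ := pairwise_ne_of_mem_pairLink hH.sized hz
  have hact := mem_of_mem_erase (hH.nbhd_subset x (mem_nbhd_of_mem_pairLink hz))
  simp [hact, hxz.symm, hyz.symm, -mem_union]

/-- The edges on `{x, y}` whose third vertex is light are covered by the light cliques containing
both `x` and `y`; fewer than `p` third vertices are heavy. -/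
lemma redCodegree_le_setDegree_lightCliques (hH : IsCliqueDivisible (p + 2) 3 H)
    (hheavy : #(heavy p H) ≤ p + 1) (hx : x ∈ heavy p H) (hy : y ∈ heavy p H) (hxy : x ≠ y) :
    redCodegree p H x y ≤ setDegree (lightCliques p H) {x, y} := by
  set Q := {q ∈ lightCliques p H | {x, y} ⊆ q}
  have hcover : pairLink H x y ⊆ heavy p H \ {x, y} ∪ Q.biUnion (· \ {x, y}) := by
    intro z hz
    obtain ⟨hzact, hzxy⟩ := mem_sdiff.1 (hH.pairLink_subset_sdiff x y hz)
    obtain hzh | hzl := mem_union.1 hzact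
    · exact mem_union_left _ (mem_sdiff.2 ⟨hzh, hzxy⟩)
    have hsub : {x, y} ⊆ closedNbhd H z := by
      simp only [insert_subset_iff, singleton_subset_iff, mem_closedNbhd]
      exact ⟨.inr (mem_nbhd_comm.1 (mem_nbhd_of_mem_pairLink hz)),
        .inr (mem_nbhd_of_mem_pairLink (mem_pairLink_rotate.1 (mem_pairLink_rotate.1 hz)))⟩
    exact mem_union_right _ (mem_biUnion.2 ⟨closedNbhd H z,
      mem_filter.2 ⟨mem_lightCliques.2 ⟨z, hzl, rfl⟩, hsub⟩,
      mem_sdiff.2 ⟨mem_insert_self _ _, hzxy⟩⟩)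
  have hpair : {x, y} ⊆ heavy p H := by simp [insert_subset_iff, hx, hy]
  have hQ : #(Q.biUnion (· \ {x, y})) ≤ #Q * p := by
    refine card_biUnion_le_card_mul _ _ _ fun q hq => ?_
    obtain ⟨hqC, hxyq⟩ := mem_filter.1 hq
    rw [card_sdiff_of_subset hxyq, hH.sized_lightCliques hqC, card_pair hxy, Nat.add_sub_cancel]
  have hcard := (card_le_card hcover).trans ((card_union_le _ _).trans (add_le_add_right hQ _))
  have htwo := card_le_card hpair
  rw [← hH.mul_redCodegree, card_sdiff_of_subset hpair, card_pair hxy] at hcard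
  rw [card_pair hxy] at htwo
  change _ ≤ #Q
  have hlt : p * redCodegree p H x y < p * (#Q + 1) := by
    rw [mul_add_one, mul_comm p #Q]
    omega
  exact Nat.le_of_lt_succ (Nat.lt_of_mul_lt_mul_left hlt)

lemma redDegree_le_setDegree_lightCliques (hH : IsCliqueDivisible (p + 2) 3 H)
    (hheavy : #(heavy p H) ≤ p + 1) (hx : x ∈ heavy p H) :
    redDegree p H x ≤ setDegree (lightCliques p H) {x} := by
  have hnonneg : (0 : ℤ) ≤ (p + 1) * (setDegree (lightCliques p H) {x} - redDegree p H x) := by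
    rw [← hH.sum_heavy_setDegree_lightCliques_pair_sub]
    refine sum_nonneg fun y hy => ?_
    obtain ⟨hyx, hyh⟩ := mem_erase.1 hy
    have := hH.redCodegree_le_setDegree_lightCliques hheavy hx hyh hyx.symm
    omega
  have := nonneg_of_mul_nonneg_right hnonneg (by positivity)
  omega

lemma card_sdiff_closedNbhd_add_le (hH : IsCliqueDivisible (p + 2) 3 H)
    (hx : x ∈ heavy p H) :
    #((heavy p H ∪ light p H) \ closedNbhd H x) + (2 * p + 2) ≤ #(heavy p H) + #(light p H) := by
  have hsub : closedNbhd H x ⊆ heavy p H ∪ light p H :=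
    insert_subset (mem_union_left _ hx) ((hH.nbhd_subset x).trans (erase_subset _ _))
  have hnbhd := hH.two_mul_lt_card_nbhd_of_mem_heavy hx
  rw [← card_union_of_disjoint (disjoint_heavy_light p H), ← card_sdiff_add_card_eq_card hsub,
    closedNbhd, card_insert_of_notMem (notMem_nbhd_self hH.sized x)]
  omega

lemma exists_mem_heavy_redDegree_add_le (hH : IsCliqueDivisible (p + 2) 3 H)
    (hheavy : #(heavy p H) ≤ p + 1) (hsum : ∑ x, redDegree p H x < 3 * (p + 2))
    (hthree : 3 ≤ #(lightCliques p H)) : ∃ x ∈ heavy p H,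
      redDegree p H x + #(lightCliques p H) ≤ setDegree (lightCliques p H) {x} + 2 := by
  by_contra! hlt
  have hle := sum_le_card_nsmul (heavy p H)
    (fun x => (setDegree (lightCliques p H) {x} : ℤ) - redDegree p H x) (#(lightCliques p H) - 3)
    fun x hx => by have := hlt x hx; omega
  rw [hH.sum_heavy_setDegree_lightCliques_sub, nsmul_eq_mul] at hle
  zify at hsum hheavy hthree
  nlinarith

lemma exists_mem_heavy_redCodegree_add_le (hH : IsCliqueDivisible (p + 2) 3 H)
    (hheavy : #(heavy p H) ≤ p + 1) (hthree : 3 ≤ #(lightCliques p H)) (hx : x ∈ heavy p H)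
    (hexcess : redDegree p H x + #(lightCliques p H) ≤ setDegree (lightCliques p H) {x} + 2) :
    ∃ y ∈ (heavy p H).erase x,
      redCodegree p H x y + #(lightCliques p H) ≤ setDegree (lightCliques p H) {x, y} + 1 := by
  by_contra! hlt
  have hle := sum_le_card_nsmul ((heavy p H).erase x)
    (fun y => (setDegree (lightCliques p H) {x, y} : ℤ) - redCodegree p H x y)
    (#(lightCliques p H) - 2) fun y hy => by have := hlt y hy; omega
  rw [hH.sum_heavy_setDegree_lightCliques_pair_sub, nsmul_eq_mul] at hle
  have herase : #((heavy p H).erase x) ≤ p := by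
    rw [card_erase_of_mem hx]
    omega
  zify at herase hthree hexcess
  nlinarith

/-- Otherwise some heavy vertex `x` lies in at least `#C - 2` more light cliques than its reduced
degree requires, where `C` is the family of all light cliques, and then some heavy pair `{x, y}`
lies in `#C - 1` more than its reduced codegree requires. Hence all light vertices belong to the
link of this pair, which is too small. -/
lemma card_lightCliques_le_two (hH : IsCliqueDivisible (p + 2) 3 H)
    (hheavy : #(heavy p H) ≤ p + 1) (hsum : ∑ x, redDegree p H x < 3 * (p + 2)) :
    #(lightCliques p H) ≤ 2 := by
  by_contra! hthree
  obtain ⟨x, hx, hxC⟩ := hH.exists_mem_heavy_redDegree_add_le hheavy hsum hthree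
  obtain ⟨y, hy, hyC⟩ := hH.exists_mem_heavy_redCodegree_add_le hheavy hthree hx hxC
  obtain ⟨hyx, hyh⟩ := mem_erase.1 hy
  have hmem : ∀ b ∈ light p H, {x, y} ⊆ closedNbhd H b → b ∈ pairLink H x y := fun b hb =>
    hH.mem_pairLink_of_subset_closedNbhd hb hx hyh hyx.symm
  have hpos : 0 < redCodegree p H x y := by
    have hdeg : 0 < setDegree (lightCliques p H) {x, y} := by omega
    obtain ⟨q, hq⟩ := card_pos.1 hdeg
    obtain ⟨hqC, hxyq⟩ := mem_filter.1 hq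
    obtain ⟨b, hb, rfl⟩ := mem_lightCliques.1 hqC
    exact hH.redCodegree_pos_iff.2 (mem_nbhd.2 ⟨b, hmem b hb hxyq⟩)
  have hle := setDegree_le_card (lightCliques p H) {x, y}
  have hall : ∀ q ∈ lightCliques p H, {x, y} ⊆ q := setDegree_eq_card_iff.1 (by omega)
  have hlight : light p H ⊆ pairLink H x y := fun b hb =>
    hmem b hb (hall _ (mem_lightCliques.2 ⟨b, hb, rfl⟩))
  have hcard := card_le_card hlight
  rw [← hH.mul_redCodegree, show redCodegree p H x y = 1 by omega] at hcard
  have := hH.card_sdiff_closedNbhd_add_le hx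
  omega

lemma dvd_sum_redDegree_of_card_heavy_le (hH : IsCliqueDivisible (p + 2) 3 H)
    (hheavy : #(heavy p H) ≤ p + 1) (hsum : ∑ x, redDegree p H x < 3 * (p + 2)) :
    p + 2 ∣ ∑ x, redDegree p H x := by
  have hle_two := hH.card_lightCliques_le_two hheavy hsum
  have hzero : ∀ x ∈ heavy p H,
      (setDegree (lightCliques p H) {x} : ℤ) - redDegree p H x = 0 := by
    intro x hx
    have := hH.redDegree_le_setDegree_lightCliques hheavy hx
    have := setDegree_le_card (lightCliques p H) {x}
    have := mem_heavy.1 hx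
    omega
  have hcount := hH.sum_heavy_setDegree_lightCliques_sub
  rw [sum_eq_zero hzero] at hcount
  refine ⟨#(lightCliques p H), ?_⟩
  zify
  linarith

/-! ### Bounding the number of heavy vertices -/

lemma sum_heavy_add_sum_light_redCodegree (hH : IsCliqueDivisible (p + 2) 3 H) (x : V) :
    ∑ y ∈ heavy p H, redCodegree p H x y + ∑ y ∈ light p H, redCodegree p H x y =
      (p + 1) * redDegree p H x := by
  rw [← sum_union (disjoint_heavy_light p H), ← hH.sum_nbhd_redCodegree]
  refine (sum_subset ((hH.nbhd_subset x).trans (erase_subset _ _)) fun y _ hy => ?_).symm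
  rw [← hH.redCodegree_pos_iff] at hy
  omega

lemma exists_mem_heavy_notMem_nbhd (hH : IsCliqueDivisible (p + 2) 3 H)
    (hheavy : p + 1 < #(heavy p H)) (hb : b ∈ light p H) : ∃ x ∈ heavy p H, b ∉ nbhd H x := by
  rw [← hH.card_nbhd_of_mem_light hb] at hheavy
  obtain ⟨x, hx, hxb⟩ := exists_mem_notMem_of_card_lt_card hheavy
  exact ⟨x, hx, mt mem_nbhd_comm.1 hxb⟩

lemma card_heavy_and_card_light_of_lt (hH : IsCliqueDivisible (p + 2) 3 H) (hp : 2 ≤ p)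
    (hheavy : p + 1 < #(heavy p H)) (hsum : ∑ x, redDegree p H x < 3 * (p + 2)) :
    #(heavy p H) = p + 2 ∧ #(light p H) = p + 1 ∧ ∀ x ∈ heavy p H, redDegree p H x = 2 := by
  have hle : ∑ x ∈ heavy p H, redDegree p H x + #(light p H) ≤ ∑ x, redDegree p H x := by
    rw [card_eq_sum_ones, ← sum_congr rfl fun b hb => mem_light.1 hb,
      ← sum_union (disjoint_heavy_light p H)]
    exact sum_le_sum_of_subset (subset_univ _)
  have htwo : #(heavy p H) * 2 ≤ ∑ x ∈ heavy p H, redDegree p H x :=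
    card_nsmul_le_sum _ _ _ fun x hx => mem_heavy.1 hx
  obtain ⟨x₀, hx₀⟩ : (heavy p H).Nonempty := card_pos.1 (by omega)
  have hactive := hH.card_sdiff_closedNbhd_add_le hx₀
  obtain ⟨b, hb⟩ : (light p H).Nonempty := card_pos.1 (by omega)
  obtain ⟨x, hx, hxb⟩ := hH.exists_mem_heavy_notMem_nbhd hheavy hb
  have hmissing : 0 < #((heavy p H ∪ light p H) \ closedNbhd H x) :=
    card_pos.2 ⟨b, by simp [hb, mem_closedNbhd, (ne_of_mem_heavy_of_mem_light hx hb).symm, hxb]⟩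
  have hactive' := hH.card_sdiff_closedNbhd_add_le hx
  refine ⟨by omega, by omega, fun y hy => ?_⟩
  have heq : ∑ x ∈ heavy p H, redDegree p H x = ∑ x ∈ heavy p H, 2 := by
    rw [sum_const, smul_eq_mul]
    omega
  exact ((sum_eq_sum_iff_of_le fun x hx => mem_heavy.1 hx).1 heq.symm y hy).symm

lemma eq_of_notMem_nbhd_of_mem_heavy (hH : IsCliqueDivisible (p + 2) 3 H)
    (hheavy : #(heavy p H) = p + 2) (hlight : #(light p H) = p + 1)
    (hx : x ∈ heavy p H) (hb : b ∈ light p H) (hc : c ∈ light p H) (hbx : b ∉ nbhd H x)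
    (hcx : c ∉ nbhd H x) : b = c := by
  have hone : #((heavy p H ∪ light p H) \ closedNbhd H x) ≤ 1 := by
    have := hH.card_sdiff_closedNbhd_add_le hx
    omega
  refine card_le_one.1 hone b ?_ c ?_
  · simp [hb, mem_closedNbhd, (ne_of_mem_heavy_of_mem_light hx hb).symm, hbx]
  · simp [hc, mem_closedNbhd, (ne_of_mem_heavy_of_mem_light hx hc).symm, hcx]

lemma redCodegree_le_one_of_notMem_nbhd (hH : IsCliqueDivisible (p + 2) 3 H)
    (hheavy : #(heavy p H) = p + 2) (hlight : #(light p H) = p + 1)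
    (hx : x ∈ heavy p H) (hy : y ∈ heavy p H) (hxy : x ≠ y)
    (hb : b ∈ light p H) (hc : c ∈ light p H) (hbc : b ≠ c) (hbx : b ∉ nbhd H x)
    (hcy : c ∉ nbhd H y) : redCodegree p H x y ≤ 1 := by
  have hpair : {x, y, b, c} ⊆ heavy p H ∪ light p H := by
    simp [insert_subset_iff, hx, hy, hb, hc]
  have hfour : #{x, y, b, c} = 4 := by
    simp [hxy, hbc, ne_of_mem_heavy_of_mem_light hx hb, ne_of_mem_heavy_of_mem_light hx hc,
      ne_of_mem_heavy_of_mem_light hy hb, ne_of_mem_heavy_of_mem_light hy hc]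
  have hsub : pairLink H x y ⊆ (heavy p H ∪ light p H) \ {x, y, b, c} := by
    intro z hz
    obtain ⟨hzact, hzxy⟩ := mem_sdiff.1 (hH.pairLink_subset_sdiff x y hz)
    have hzb : z ≠ b := ne_of_mem_of_not_mem (mem_nbhd_of_mem_pairLink hz) hbx
    rw [pairLink_comm] at hz
    have hzc : z ≠ c := ne_of_mem_of_not_mem (mem_nbhd_of_mem_pairLink hz) hcy
    grind
  have hcard := card_le_card hsub
  rw [← hH.mul_redCodegree, card_sdiff_of_subset hpair, hfour,
    card_union_of_disjoint (disjoint_heavy_light p H), hheavy, hlight] at hcard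
  obtain rfl | hp := p.eq_zero_or_pos
  · simp [redCodegree]
  · have : p * redCodegree p H x y < p * 2 := by omega
    exact Nat.le_of_lt_succ (Nat.lt_of_mul_lt_mul_left this)

lemma two_le_redCodegree_of_forall_le_one {w : V} (hH : IsCliqueDivisible (p + 2) 3 H)
    (hheavy : #(heavy p H) = p + 2) (hlight : #(light p H) = p + 1)
    (hx : x ∈ heavy p H) (hw : w ∈ heavy p H)
    (hxw : x ≠ w) (hdeg : redDegree p H x = 2) (hb : b ∈ light p H) (hbx : b ∉ nbhd H x)
    (hle : ∀ y ∈ heavy p H, y ≠ x → y ≠ w → redCodegree p H x y ≤ 1) :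
    2 ≤ redCodegree p H x w := by
  have hxw' : x ∈ (heavy p H).erase w := mem_erase.2 ⟨hxw, hx⟩
  have hheavy_sum : ∑ y ∈ heavy p H, redCodegree p H x y ≤ redCodegree p H x w + p := by
    rw [← add_sum_erase _ _ hw, ← add_sum_erase _ _ hxw', hH.redCodegree_self, zero_add]
    refine Nat.add_le_add_left ((sum_le_card_nsmul _ _ 1 fun y hy => ?_).trans_eq ?_) _
    · obtain ⟨hyx, hyw, hyh⟩ : y ≠ x ∧ y ≠ w ∧ y ∈ heavy p H := by simpa using hy
      exact hle y hyh hyx hyw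
    · rw [card_erase_of_mem hxw', card_erase_of_mem hw, hheavy]
      simp
  have hlight_sum : ∑ y ∈ light p H, redCodegree p H x y ≤ p := by
    rw [← add_sum_erase _ _ hb, Nat.eq_zero_of_not_pos (mt hH.redCodegree_pos_iff.1 hbx), zero_add]
    refine (sum_le_card_nsmul _ _ 1 fun y hy => ?_).trans_eq ?_
    · rw [redCodegree_comm, hH.redCodegree_of_mem_light (mem_of_mem_erase hy)]
      split_ifs <;> simp
    · rw [card_erase_of_mem hb, hlight]
      simp
  have htotal := hH.sum_heavy_add_sum_light_redCodegree x
  rw [hdeg] at htotal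
  omega

/-- Otherwise the counts are extremal: each light vertex `b` misses its own heavy vertex `f b`, so
that just one heavy vertex `w` is not of this form. The pairs `{w, f b}` have codegree at least `2`
and use up the degree of `w`, which therefore misses all light vertices instead of at most one. -/
lemma card_heavy_le (hH : IsCliqueDivisible (p + 2) 3 H) (hp : 2 ≤ p)
    (hsum : ∑ x, redDegree p H x < 3 * (p + 2)) : #(heavy p H) ≤ p + 1 := by
  by_contra! hlt
  obtain ⟨hheavy, hlight, hdeg⟩ := hH.card_heavy_and_card_light_of_lt hp hlt hsum
  choose! f hf hfmiss using fun b hb => hH.exists_mem_heavy_notMem_nbhd (b := b) hlt hb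
  have hinj : Set.InjOn f (light p H) := fun b hb c hc hbc =>
    hH.eq_of_notMem_nbhd_of_mem_heavy hheavy hlight (hf b hb) hb hc (hfmiss b hb)
      (hbc ▸ hfmiss c hc)
  have himage : #((light p H).image f) = p + 1 := by rw [card_image_of_injOn hinj, hlight]
  obtain ⟨w, hw, hwf⟩ := exists_mem_notMem_of_card_lt_card (himage.trans_lt hlt)
  have herase : #((heavy p H).erase w) = p + 1 := by rw [card_erase_of_mem hw, hheavy]; rfl
  have hcover : (light p H).image f = (heavy p H).erase w := by
    refine eq_of_subset_of_card_le (fun x hx => ?_) (herase.trans himage.symm).le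
    obtain ⟨b, hb, rfl⟩ := mem_image.1 hx
    exact mem_erase.2 ⟨fun h => hwf (h ▸ hx), hf b hb⟩
  have htwo : ∀ x ∈ (heavy p H).erase w, 2 ≤ redCodegree p H w x := by
    rw [← hcover, forall_mem_image]
    intro b hb
    rw [redCodegree_comm]
    refine hH.two_le_redCodegree_of_forall_le_one hheavy hlight (hf b hb) hw
      (fun h => hwf (h ▸ mem_image_of_mem f hb)) (hdeg _ (hf b hb)) hb (hfmiss b hb) ?_
    intro y hy hyb hyw
    obtain ⟨c, hc, rfl⟩ := mem_image.1 (hcover ▸ mem_erase.2 ⟨hyw, hy⟩)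
    exact hH.redCodegree_le_one_of_notMem_nbhd hheavy hlight (hf b hb) hy hyb.symm hb hc
      (fun h => hyb (h ▸ rfl)) (hfmiss b hb) (hfmiss c hc)
  have hmiss : ∀ b ∈ light p H, b ∉ nbhd H w := by
    have htotal := hH.sum_heavy_add_sum_light_redCodegree w
    have hheavy_sum : (p + 1) * 2 ≤ ∑ x ∈ (heavy p H).erase w, redCodegree p H w x :=
      herase ▸ card_nsmul_le_sum _ _ 2 htwo
    rw [hdeg w hw, ← add_sum_erase _ _ hw, hH.redCodegree_self, zero_add] at htotal
    have hzero : ∑ b ∈ light p H, redCodegree p H w b = 0 := by omega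
    intro b hb
    rw [← hH.redCodegree_pos_iff, sum_eq_zero_iff.1 hzero b hb]
    exact lt_irrefl 0
  obtain ⟨b, hb, c, hc, hbc⟩ := one_lt_card.1 (show 1 < #(light p H) by omega)
  exact hbc (hH.eq_of_notMem_nbhd_of_mem_heavy hheavy hlight hw hb hc (hmiss b hb) (hmiss c hc))

lemma dvd_sum_redDegree (hH : IsCliqueDivisible (p + 2) 3 H) (hp : 2 ≤ p)
    (hsum : ∑ x, redDegree p H x < 3 * (p + 2)) : p + 2 ∣ ∑ x, redDegree p H x :=
  hH.dvd_sum_redDegree_of_card_heavy_le (hH.card_heavy_le hp hsum) hsum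

end IsCliqueDivisible

end Fintype

theorem IsCliqueDivisible.choose_dvd_card [Finite V] (hH : IsCliqueDivisible k 3 H) (hk : 4 ≤ k)
    (hcard : #H < 3 * k.choose 3) : k.choose 3 ∣ #H := by
  have := Fintype.ofFinite V
  obtain ⟨p, rfl⟩ := Nat.exists_eq_add_of_le' (show 2 ≤ k by omega)
  have hedges : (p + 1).choose 2 * ∑ x, redDegree p H x = 3 * #H := by
    rw [← sum_setDegree_singleton hH.sized, mul_sum]
    exact sum_congr rfl fun x _ => hH.mul_redDegree x
  have hclique : (p + 1).choose 2 * (p + 2) = 3 * (p + 2).choose 3 := by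
    rw [mul_comm, Nat.add_one_mul_choose_eq, mul_comm]
  have hsum : ∑ x, redDegree p H x < 3 * (p + 2) := by
    refine Nat.lt_of_mul_lt_mul_left (a := (p + 1).choose 2) ?_
    linarith
  have hdvd := Nat.mul_dvd_mul_left ((p + 1).choose 2) (hH.dvd_sum_redDegree (by omega) hsum)
  rw [hclique, hedges] at hdvd
  exact Nat.dvd_of_mul_dvd_mul_left three_pos hdvd

theorem IsPacking.card_add_three_mul_choose_le [Fintype V] (hB : IsPacking k 3 B) (hk : 4 ≤ k)
    (h1 : k - 2 ∣ Fintype.card V - 2) (h2 : (k - 1).choose 2 ∣ (Fintype.card V - 1).choose 2)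
    (h3 : ¬k.choose 3 ∣ (Fintype.card V).choose 3) :
    (#B + 3) * k.choose 3 ≤ (Fintype.card V).choose 3 := by
  have hleave : IsCliqueDivisible k 3 (leave 3 B) := by
    refine hB.isCliqueDivisible_leave fun s hs hs3 => ?_
    interval_cases s
    · exact h2
    · simpa using h1
    · simp
  have hcount := hB.setDegree_leave_add (S := ∅) (Nat.zero_le 3)
  simp only [setDegree_empty, card_empty, Nat.sub_zero] at hcount
  by_contra! hlt
  have hlarge : #(leave 3 B) < 3 * k.choose 3 := by linarith
  exact h3 (hcount ▸ dvd_add (hleave.choose_dvd_card hk hlarge) (dvd_mul_left _ _))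

/-! ### The Johnson bound -/

lemma exists_isPacking_card_eq_packingNumber (n k t : ℕ) :
    ∃ B : Finset (Finset (Fin n)), IsPacking k t B ∧ #B = packingNumber n k t := by
  have hmem : packingNumber n k t ∈ {m | ∃ B : Finset (Finset (Fin n)),
      (∀ b ∈ B, b.card = k) ∧
      (∀ T : Finset (Fin n), T.card = t → (B.filter (fun b => T ⊆ b)).card ≤ 1) ∧
      B.card = m} := by
    refine Nat.sSup_mem ⟨0, ∅, by simp⟩ ⟨#(univ : Finset (Finset (Fin n))), ?_⟩
    rintro m ⟨B, -, -, rfl⟩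
    exact card_le_univ B
  obtain ⟨B, hsized, hle, hcard⟩ := hmem
  exact ⟨B, ⟨hsized, hle⟩, hcard⟩

lemma choose_dvd_choose_iff_descFactorial {n k t : ℕ} :
    k.choose t ∣ n.choose t ↔ k.descFactorial t ∣ n.descFactorial t := by
  rw [Nat.descFactorial_eq_factorial_mul_choose, Nat.descFactorial_eq_factorial_mul_choose,
    Nat.mul_dvd_mul_iff_left t.factorial_pos]

lemma descFactorial_three (n : ℕ) : n.descFactorial 3 = n * (n - 1) * (n - 2) := by
  simp only [Nat.descFactorial_succ, Nat.descFactorial_zero, Nat.sub_zero]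
  ring

lemma descFactorial_pred_two (n : ℕ) : (n - 1).descFactorial 2 = (n - 1) * (n - 2) := by
  simp only [Nat.descFactorial_succ, Nat.descFactorial_zero, Nat.sub_zero, Nat.sub_sub]
  ring

lemma johnson_eq_choose_div_choose {n k : ℕ} (h1 : k - 2 ∣ n - 2)
    (h2 : (k - 1) * (k - 2) ∣ (n - 1) * (n - 2)) :
    n * ((n - 1) * ((n - 2) / (k - 2)) / (k - 1)) / k = n.choose 3 / k.choose 3 := by
  calc n * ((n - 1) * ((n - 2) / (k - 2)) / (k - 1)) / k
      = n * ((n - 1) * (n - 2) / ((k - 1) * (k - 2))) / k := by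
        rw [← Nat.mul_div_assoc _ h1, Nat.div_div_eq_div_mul, mul_comm (k - 2)]
    _ = n.descFactorial 3 / k.descFactorial 3 := by
        rw [← Nat.mul_div_assoc _ h2, Nat.div_div_eq_div_mul, descFactorial_three,
          descFactorial_three, ← mul_assoc, mul_comm _ k, ← mul_assoc]
    _ = n.choose 3 / k.choose 3 := by
        rw [Nat.descFactorial_eq_factorial_mul_choose, Nat.descFactorial_eq_factorial_mul_choose,
          Nat.mul_div_mul_left _ _ (Nat.factorial_pos 3)]

end

theorem stmt3 (n k : ℕ) (hk : 4 ≤ k) (hkn : k < n)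
    (h1 : (k - 2) ∣ (n - 2))
    (h2 : (k - 1) * (k - 2) ∣ (n - 1) * (n - 2))
    (h3 : ¬ (k * (k - 1) * (k - 2) ∣ n * (n - 1) * (n - 2))) :
    (packingNumber n k 3 : ℤ) ≤
      ((n * ((n - 1) * ((n - 2) / (k - 2)) / (k - 1)) / k : ℕ) : ℤ) - 3 := by
  obtain ⟨B, hB, hcard⟩ := exists_isPacking_card_eq_packingNumber n k 3
  have hpair : (k - 1).choose 2 ∣ (n - 1).choose 2 := by
    rwa [choose_dvd_choose_iff_descFactorial, descFactorial_pred_two, descFactorial_pred_two]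
  have htriple : ¬k.choose 3 ∣ n.choose 3 := by
    rwa [choose_dvd_choose_iff_descFactorial, descFactorial_three, descFactorial_three]
  have hbound : (packingNumber n k 3 + 3) * k.choose 3 ≤ n.choose 3 := by
    simpa [hcard] using hB.card_add_three_mul_choose_le hk (by simpa using h1)
      (by simpa using hpair) (by simpa using htriple)
  have hdiv : packingNumber n k 3 + 3 ≤ n.choose 3 / k.choose 3 :=
    (Nat.le_div_iff_mul_le (Nat.choose_pos (by omega))).2 hbound
  rw [johnson_eq_choose_div_choose h1 h2]
  omega
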